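/- For every n ≥ 2, the complement of the even cycle graph C_{2n} on 2n vertices is word-representable. -/

import Mathlib

/-- Two distinct letters `x` and `y` alternate in the word `w` if, after deleting all
letters other than `x` and `y`, no two consecutive letters of the remaining word are equal. -/
def Alternate {V : Type*} [DecidableEq V] (w : List V) (x y : V) : Prop :=
  (w.filter fun z => decide (z = x ∨ z = y)).Chain' (· ≠ ·)

/-- A word `w` represents the simple graph `G` if every vertex occurs in `w` at least once
and two distinct vertices alternate in `w` exactly when they are adjacent in `G`. -/
def Represents {V : Type*} [DecidableEq V] (G : SimpleGraph V) (w : List V) : Prop :=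
  (∀ v : V, v ∈ w) ∧ ∀ x y : V, x ≠ y → (Alternate w x y ↔ G.Adj x y)

/-- A simple graph is word-representable if some word represents it. -/
def WordRepresentable {V : Type*} [DecidableEq V] (G : SimpleGraph V) : Prop :=
  ∃ w : List V, Represents G w

/-- The cycle graph on `m` vertices `{0, …, m-1}`: `i` and `j` are adjacent iff
`i - j ≡ ±1 (mod m)`. -/
def cycleGraph (m : ℕ) : SimpleGraph (Fin m) :=
  SimpleGraph.fromRel fun i j => ((i : ℕ) + 1) % m = (j : ℕ)

/-!
Swapping two consecutive letters `b a` of a word changes no pairwise subword other than the one on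
`a` and `b`. So if the word represents a graph in which `a` and `b` are adjacent, and `a` occurs
earlier, then the swap deletes exactly the edge `ab`.

The complement of the path `0, 1, …, m - 1` is represented by a concatenation of three permutations
of the vertices: the increasing one in the middle, preceded by the one that inverts the path edges
starting at even vertices and followed by the one that inverts those starting at odd vertices. The
middle permutation ends in `m - 1` and the last one begins with `0`; swapping these two consecutive
letters removes the edge between `0` and `m - 1`, which leaves the complement of the cycle.
-/

section Alternate

variable {V : Type*} [DecidableEq V] {u v w : List V} {a b x y : V}

/-- The subword of `w` formed by the occurrences of the letters `x` and `y`. -/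
def pairSubword (w : List V) (x y : V) : List V :=
  w.filter fun z ↦ decide (z = x ∨ z = y)

theorem alternate_iff_isChain_pairSubword :
    Alternate w x y ↔ (pairSubword w x y).IsChain (· ≠ ·) :=
  Iff.rfl

theorem pairSubword_comm (w : List V) (x y : V) : pairSubword w x y = pairSubword w y x := by
  simp only [pairSubword, or_comm]

theorem pairSubword_append (u v : List V) (x y : V) :
    pairSubword (u ++ v) x y = pairSubword u x y ++ pairSubword v x y :=
  List.filter_append ..

theorem alternate_comm : Alternate w x y ↔ Alternate w y x := by
  rw [alternate_iff_isChain_pairSubword, pairSubword_comm, alternate_iff_isChain_pairSubword]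

theorem alternate_swap_iff (h : s(x, y) ≠ s(a, b)) :
    Alternate (u ++ a :: b :: v) x y ↔ Alternate (u ++ b :: a :: v) x y := by
  have hswap : pairSubword (a :: b :: v) x y = pairSubword (b :: a :: v) x y := by
    grind [pairSubword]
  simp only [alternate_iff_isChain_pairSubword, pairSubword_append, hswap]

theorem Alternate.not_alternate_swap (ha : a ∈ u) (h : Alternate (u ++ b :: a :: v) a b) :
    ¬ Alternate (u ++ a :: b :: v) a b := by
  intro h'
  have hne : pairSubword u a b ≠ [] :=
    List.ne_nil_of_mem (List.mem_filter.mpr ⟨ha, by simp⟩)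
  -- The last of the letters `a`, `b` in `u` is followed by `b` in one word and by `a` in the other.
  obtain ⟨c, hc⟩ := Option.isSome_iff_exists.mp (List.getLast?_isSome.mpr hne)
  have hcab : c = a ∨ c = b := by simpa using List.of_mem_filter (List.mem_of_getLast? hc)
  rw [alternate_iff_isChain_pairSubword, pairSubword_append, List.isChain_append] at h h'
  have hca : c ≠ a := h'.2.2 c hc a (by simp [pairSubword])
  have hcb : c ≠ b := h.2.2 c hc b (by simp [pairSubword])
  exact hcab.elim hca hcb

theorem Represents.sdiff_edge {G : SimpleGraph V} (h : Represents G (u ++ b :: a :: v))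
    (hab : G.Adj a b) (ha : a ∈ u) :
    Represents (G \ SimpleGraph.edge a b) (u ++ a :: b :: v) := by
  refine ⟨fun z ↦ by simpa [or_left_comm] using h.1 z, fun x y hxy ↦ ?_⟩
  have hnot : ¬ Alternate (u ++ a :: b :: v) a b :=
    ((h.2 a b hab.ne).mpr hab).not_alternate_swap ha
  by_cases hs : s(x, y) = s(a, b)
  · rcases Sym2.eq_iff.mp hs with ⟨rfl, rfl⟩ | ⟨rfl, rfl⟩
    · simp [hnot, SimpleGraph.edge_adj, hxy]
    · simp [hnot, alternate_comm (x := x), SimpleGraph.edge_adj, hxy]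
  · rw [alternate_swap_iff hs, h.2 x y hxy]
    simp [SimpleGraph.edge_adj, hxy, ← Sym2.eq_iff, hs]

end Alternate

section Listing

variable {V : Type*} [DecidableEq V] {m : ℕ} {x y : V}

theorem pairSubword_ofFn_of_lt (e : Fin m ≃ V) (h : e.symm x < e.symm y) :
    pairSubword (List.ofFn e) x y = [x, y] := by
  have hxy : x ≠ y := by grind
  have hsorted : (List.ofFn e).Pairwise fun a b ↦ e.symm a < e.symm b := by
    simp [List.pairwise_ofFn]
  have hperm : (pairSubword (List.ofFn e) x y).Perm [x, y] := by
    refine (List.perm_ext_iff_of_nodup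
      ((List.nodup_ofFn.mpr e.injective).filter _) (by simp [hxy])).mpr fun z ↦ ?_
    simp [List.mem_ofFn, e.surjective z]
  exact hperm.eq_of_pairwise (fun _ _ _ _ hab hba ↦ absurd hab hba.asymm)
    (hsorted.filter _) (by simp [h])

theorem pairSubword_ofFn (e : Fin m ≃ V) (hxy : x ≠ y) :
    pairSubword (List.ofFn e) x y = if e.symm x < e.symm y then [x, y] else [y, x] := by
  split_ifs with h
  · exact pairSubword_ofFn_of_lt e h
  · rw [pairSubword_comm]
    exact pairSubword_ofFn_of_lt e <|
      (not_lt.mp h).lt_of_ne (e.symm.injective.ne hxy.symm)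

/-- The concatenation of the permutations of `V` given by the enumerations in `l`. A graph
represented by such a word is called permutationally representable. -/
def permWord (l : List (Fin m ≃ V)) : List V :=
  l.flatMap fun e : Fin m ≃ V ↦ List.ofFn e

theorem pairSubword_permWord (l : List (Fin m ≃ V)) (hxy : x ≠ y) :
    pairSubword (permWord l) x y =
      (l.map fun e ↦ if e.symm x < e.symm y then [x, y] else [y, x]).flatten := by
  simp only [← pairSubword_ofFn _ hxy, pairSubword, permWord, List.flatMap,
    List.filter_flatten, List.map_map, Function.comp_def]

theorem alternate_permWord_iff (l : List (Fin m ≃ V)) (hxy : x ≠ y) :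
    Alternate (permWord l) x y ↔
      l.IsChain fun e f ↦ (e.symm x < e.symm y ↔ f.symm x < f.symm y) := by
  have hpair (e : Fin m ≃ V) :
      (if e.symm x < e.symm y then [x, y] else [y, x]).IsChain (· ≠ ·) := by
    split_ifs <;> simp [hxy, hxy.symm]
  rw [alternate_iff_isChain_pairSubword, pairSubword_permWord l hxy,
    List.isChain_flatten (by grind), List.isChain_map]
  simp only [List.forall_mem_map, hpair, implies_true, true_and]
  refine iff_of_eq (congrArg (List.IsChain · l) ?_)
  ext e f
  split_ifs <;> simp [*, hxy.symm]

end Listing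

/-- The permutation of `Fin m` exchanging `i` and `i + 1` for all `i` of the same parity as `r`
with `i + 1 < m`. The truncations `min _ (m - 1)` and `0 - 1 = 0` make it fix the endpoints left
without a partner. -/
def adjSwap (m r : ℕ) : Equiv.Perm (Fin m) :=
  Function.Involutive.toPerm
    (fun i ↦ ⟨if (i + r) % 2 = 0 then min (i + 1) (m - 1) else i - 1, by grind⟩)
    fun i ↦ by grind

theorem val_adjSwap (m r : ℕ) (i : Fin m) :
    (adjSwap m r i : ℕ) = if (i + r : ℕ) % 2 = 0 then min (i + 1 : ℕ) (m - 1) else i - 1 :=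
  rfl

theorem adjSwap_symm (m r : ℕ) : (adjSwap m r).symm = adjSwap m r :=
  rfl

theorem adjSwap_lt_adjSwap_iff {m : ℕ} (r : ℕ) {x y : Fin m} (h : x < y) :
    adjSwap m r x < adjSwap m r y ↔ ¬ ((x + r : ℕ) % 2 = 0 ∧ (x + 1 : ℕ) = y) := by
  simp only [Fin.lt_def, val_adjSwap] at h ⊢
  grind

theorem adjSwap_one_zero (k : ℕ) : adjSwap (k + 1) 1 0 = 0 :=
  Fin.ext (by simp [val_adjSwap])

theorem permWord_adjSwap_refl_adjSwap (k : ℕ) :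
    permWord [adjSwap (k + 1) 0, Equiv.refl _, adjSwap (k + 1) 1] =
      (List.ofFn (adjSwap (k + 1) 0) ++ List.ofFn (Fin.castSucc (n := k))) ++
        Fin.last k :: 0 :: List.ofFn fun i : Fin k ↦ adjSwap (k + 1) 1 i.succ := by
  have hrefl : List.ofFn (Equiv.refl (Fin (k + 1))) =
      List.ofFn (Fin.castSucc (n := k)) ++ [Fin.last k] :=
    List.ofFn_succ_last
  have hswap : List.ofFn (adjSwap (k + 1) 1) =
      0 :: List.ofFn fun i : Fin k ↦ adjSwap (k + 1) 1 i.succ := by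
    rw [List.ofFn_succ, adjSwap_one_zero]
  simp only [permWord, List.flatMap_cons, List.flatMap_nil, hrefl, hswap, List.append_assoc,
    List.append_nil, List.singleton_append]

theorem represents_compl_pathGraph (m : ℕ) :
    Represents (SimpleGraph.pathGraph m)ᶜ (permWord [adjSwap m 0, Equiv.refl _, adjSwap m 1]) := by
  refine ⟨fun z ↦ by simp [permWord, List.mem_ofFn], fun x y hxy ↦ ?_⟩
  wlog h : x < y generalizing x y
  · rw [alternate_comm, SimpleGraph.adj_comm]
    exact this y x hxy.symm (by grind)
  have hadj : (SimpleGraph.pathGraph m)ᶜ.Adj x y ↔ (x + 1 : ℕ) ≠ y := by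
    simp only [SimpleGraph.compl_adj, SimpleGraph.pathGraph_adj]
    grind
  rw [alternate_permWord_iff _ hxy, hadj]
  simp only [List.isChain_cons_cons, List.isChain_singleton, adjSwap_symm, Equiv.refl_symm,
    Equiv.refl_apply, adjSwap_lt_adjSwap_iff _ h, h]
  grind

theorem cycleGraph_succ_eq_sup (k : ℕ) :
    cycleGraph (k + 1) = SimpleGraph.pathGraph (k + 1) ⊔ SimpleGraph.edge 0 (Fin.last k) := by
  have hmod (i : Fin (k + 1)) : ((i : ℕ) + 1) % (k + 1) =
      if (i : ℕ) = k then 0 else (i : ℕ) + 1 := by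
    split_ifs with h
    · simp [h]
    · exact Nat.mod_eq_of_lt (by omega)
  ext x y
  simp only [cycleGraph, SimpleGraph.fromRel_adj, hmod, SimpleGraph.sup_adj,
    SimpleGraph.pathGraph_adj, SimpleGraph.edge_adj, Fin.ext_iff, Fin.val_zero, Fin.val_last]
  split_ifs <;> omega

theorem complement_cycleGraph_even_wordRepresentable_general (m : ℕ) (hm : 3 ≤ m) :
    WordRepresentable (cycleGraph m)ᶜ := by
  obtain ⟨k, rfl⟩ : ∃ k, m = k + 1 := ⟨m - 1, by omega⟩
  have hadj : (SimpleGraph.pathGraph (k + 1))ᶜ.Adj 0 (Fin.last k) := by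
    simp only [SimpleGraph.compl_adj, SimpleGraph.pathGraph_adj, ne_eq, Fin.ext_iff,
      Fin.val_zero, Fin.val_last]
    omega
  have hpath := represents_compl_pathGraph (k + 1)
  rw [permWord_adjSwap_refl_adjSwap] at hpath
  have hzero : 0 ∈ List.ofFn (adjSwap (k + 1) 0) ++ List.ofFn (Fin.castSucc (n := k)) :=
    List.mem_append_left _ (List.mem_ofFn.mpr ((adjSwap (k + 1) 0).surjective 0))
  rw [cycleGraph_succ_eq_sup, compl_sup, ← sdiff_eq]
  exact ⟨_, hpath.sdiff_edge hadj hzero⟩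

/-- The complement of the even cycle graph `C_{2n}` on `2n` vertices is word-representable. -/
theorem complement_cycleGraph_even_wordRepresentable :
    ∀ n : ℕ, 2 ≤ n → WordRepresentable (cycleGraph (2 * n))ᶜ := by
  intro n hn
  exact complement_cycleGraph_even_wordRepresentable_general (2 * n) (by omega)
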